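/- Every set of 9 points in the plane in general position contains 5 points in convex position; that is, g⁽²⁾(5) ≤ 9. -/

import Mathlib

/-!
Let `p` be the lexicographically smallest of the nine points. The other eight lie in a half-plane
seen from `p`, so they can be sorted counterclockwise around `p` as `P 0, …, P 7`
(`exists_sorted`). The configuration enters the rest of the argument only through the 56 signs of
`orient (P a) (P b) (P c)`, `a < b < c`.

By the Grassmann–Plücker relations through `p`, for `a < b < c < d` the signs of
`abc, abd, acd, bcd` change at most once (`noAlternation_of_sorted`). Hence a few signs already
force a pentagon. If `abc` and `bcd` are positive, then `p, a, b, c, d` is a convex pentagon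
(`exists_pentagon_of_quad`). For `a < b < c < d < e`, think of the points as sorted from left to
right: a convex chain and a concave chain, both from `a` to `e`, that share out `b, c, d` form a
convex pentagon, and its chains are certified by the signs of their consecutive triples, three
signs in all (`exists_pentagon_of_quint`).

It remains to see that no assignment of 56 signs avoids all these sign patterns together with
those forbidden by the Grassmann–Plücker relations. This is a finite propositional statement on
clauses with at most three literals. It is settled by a plain backtracking search (`refute`) of
about two thousand nodes, which is proved sound (`refute_sound`) and evaluated by the kernel
(`refute_levels`).
-/

/-- A finite set `S` of points in `ℝ^d` is in *general position* if every
`(d+1)`-element subset of `S` is affinely independent. -/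
def InGeneralPosition (d : ℕ) (S : Finset (Fin d → ℝ)) : Prop :=
  ∀ T ⊆ S, T.card = d + 1 → AffineIndependent ℝ ((↑) : T → (Fin d → ℝ))

/-- A finite set of points is in *convex position* if no point of the set lies in
the convex hull of the other points of the set. -/
def InConvexPosition (d : ℕ) (X : Finset (Fin d → ℝ)) : Prop :=
  ∀ p ∈ X, p ∉ convexHull ℝ (↑(X.erase p) : Set (Fin d → ℝ))

/-- A *k-hole* in `S` is a `k`-element subset `X ⊆ S` in convex position such that
no point of `S \ X` lies in the convex hull of `X`. -/
def IsHole (d k : ℕ) (S X : Finset (Fin d → ℝ)) : Prop :=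
  X ⊆ S ∧ X.card = k ∧ InConvexPosition d X ∧
    ∀ p ∈ S, p ∉ X → p ∉ convexHull ℝ (↑X : Set (Fin d → ℝ))

/-! ### Orientation and convex position -/

/-- Twice the signed area of the triangle `a b c`: positive when `a, b, c` is a counterclockwise
turn, zero when the points are collinear. -/
def orient (a b c : Fin 2 → ℝ) : ℝ :=
  (b 0 - a 0) * (c 1 - a 1) - (b 1 - a 1) * (c 0 - a 0)

theorem orient_ne_zero {S : Finset (Fin 2 → ℝ)} (hgp : InGeneralPosition 2 S)
    {a b c : Fin 2 → ℝ} (ha : a ∈ S) (hb : b ∈ S) (hc : c ∈ S)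
    (hab : a ≠ b) (hac : a ≠ c) (hbc : b ≠ c) : orient a b c ≠ 0 := by
  intro h0
  have hsub : ({a, b, c} : Finset (Fin 2 → ℝ)) ⊆ S := by
    intro x hx
    simp only [Finset.mem_insert, Finset.mem_singleton] at hx
    rcases hx with rfl | rfl | rfl <;> assumption
  have hind := hgp {a, b, c} hsub (Finset.card_eq_three.2 ⟨a, b, c, hab, hac, hbc, rfl⟩)
  have hset : AffineIndependent ℝ ![a, b, c] := by
    let e : Fin 3 → ({a, b, c} : Finset (Fin 2 → ℝ)) :=
      ![⟨a, by simp⟩, ⟨b, by simp⟩, ⟨c, by simp⟩]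
    have he : Function.Injective e := by
      intro i j hij
      have hij' := congrArg Subtype.val hij
      fin_cases i <;> fin_cases j <;> simp_all [e]
    have := hind.comp_embedding ⟨e, he⟩
    convert this using 1
    funext i
    fin_cases i <;> rfl
  rw [affineIndependent_iff_not_collinear_set] at hset
  apply hset
  rw [collinear_iff_of_mem (p₀ := a) (by simp)]
  refine ⟨b - a, ?_⟩
  have hc' : ∃ r : ℝ, c = r • (b - a) +ᵥ a := by
    unfold orient at h0
    by_cases hx : b 0 - a 0 = 0
    · have hy : b 1 - a 1 ≠ 0 := by
        intro hy
        apply hab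
        funext i
        fin_cases i
        · simp only [Fin.zero_eta]; linarith
        · simp only [Fin.mk_one]; linarith
      refine ⟨(c 1 - a 1) / (b 1 - a 1), ?_⟩
      funext i
      fin_cases i <;> simp <;> field_simp <;> linarith
    · refine ⟨(c 0 - a 0) / (b 0 - a 0), ?_⟩
      funext i
      fin_cases i <;> simp <;> field_simp <;> linarith
  intro q hq
  simp only [Set.mem_insert_iff, Set.mem_singleton_iff] at hq
  rcases hq with rfl | rfl | rfl
  · exact ⟨0, by simp⟩
  · exact ⟨1, by simp⟩
  · exact hc'

/-- A line that has `q` strictly on one side and `T` weakly on the other separates `q` from the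
convex hull of `T`. -/
theorem notMem_convexHull {a b q : Fin 2 → ℝ} {T : Set (Fin 2 → ℝ)}
    (hT : ∀ t ∈ T, orient a b t ≤ 0) (hq : 0 < orient a b q) : q ∉ convexHull ℝ T := by
  intro hmem
  have hconv : Convex ℝ {t | orient a b t ≤ 0} := by
    intro x hx y hy s t hs ht hst
    simp only [Set.mem_ofPred_eq] at hx hy ⊢
    have key : orient a b (s • x + t • y) = s * orient a b x + t * orient a b y := by
      simp only [orient, Pi.add_apply, Pi.smul_apply, smul_eq_mul]
      obtain rfl : t = 1 - s := by linarith
      ring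
    rw [key]
    nlinarith [mul_nonneg hs (neg_nonneg.2 hx), mul_nonneg ht (neg_nonneg.2 hy)]
  have := convexHull_min (show T ⊆ {t | orient a b t ≤ 0} from hT) hconv hmem
  exact absurd hq (not_lt.2 this)

/-- Five points all of whose triples, taken in the given order, turn counterclockwise form a convex
pentagon. -/
theorem exists_pentagon {S : Finset (Fin 2 → ℝ)} {v₀ v₁ v₂ v₃ v₄ : Fin 2 → ℝ}
    (m₀ : v₀ ∈ S) (m₁ : v₁ ∈ S) (m₂ : v₂ ∈ S) (m₃ : v₃ ∈ S) (m₄ : v₄ ∈ S)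
    (h012 : 0 < orient v₀ v₁ v₂) (h013 : 0 < orient v₀ v₁ v₃) (h014 : 0 < orient v₀ v₁ v₄)
    (h023 : 0 < orient v₀ v₂ v₃) (h024 : 0 < orient v₀ v₂ v₄) (h034 : 0 < orient v₀ v₃ v₄)
    (h123 : 0 < orient v₁ v₂ v₃) (h124 : 0 < orient v₁ v₂ v₄) (h134 : 0 < orient v₁ v₃ v₄)
    (h234 : 0 < orient v₂ v₃ v₄) :
    ∃ X ⊆ S, X.card = 5 ∧ InConvexPosition 2 X := by
  have ne12 : ∀ {a b c : Fin 2 → ℝ}, 0 < orient a b c → a ≠ b := by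
    rintro a b c h rfl; simp [orient] at h
  have ne23 : ∀ {a b c : Fin 2 → ℝ}, 0 < orient a b c → b ≠ c := by
    rintro a b c h rfl; unfold orient at h; linarith
  have d01 := ne12 h012
  have d02 := ne12 h023
  have d03 := ne12 h034
  have d04 : v₀ ≠ v₄ := by rintro rfl; unfold orient at h014; linarith
  have d12 := ne12 h123
  have d13 := ne12 h134
  have d14 := ne23 h014
  have d23 := ne12 h234
  have d24 := ne23 h024
  have d34 := ne23 h034
  refine ⟨{v₀, v₁, v₂, v₃, v₄}, ?_, ?_, ?_⟩
  · intro x hx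
    simp only [Finset.mem_insert, Finset.mem_singleton] at hx
    rcases hx with rfl | rfl | rfl | rfl | rfl <;> assumption
  · simp [Finset.card_insert_of_notMem, *]
  · -- the line through the two neighbours of a vertex cuts it off from the other vertices
    intro p hp
    simp only [Finset.mem_insert, Finset.mem_singleton] at hp
    rcases hp with rfl | rfl | rfl | rfl | rfl
    on_goal 1 => apply notMem_convexHull (a := v₁) (b := v₄)
    on_goal 3 => apply notMem_convexHull (a := v₂) (b := v₀)
    on_goal 5 => apply notMem_convexHull (a := v₃) (b := v₁)
    on_goal 7 => apply notMem_convexHull (a := v₄) (b := v₂)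
    on_goal 9 => apply notMem_convexHull (a := v₀) (b := v₃)
    all_goals first
      | (intro t ht
         simp only [Finset.coe_erase, Finset.coe_insert, Finset.coe_singleton, Set.mem_sdiff,
           Set.mem_insert_iff, Set.mem_singleton_iff] at ht
         obtain ⟨rfl | rfl | rfl | rfl | rfl, hne⟩ := ht <;> first
           | exact absurd rfl hne
           | (unfold orient at *; linarith))
      | (unfold orient at *; linarith)

/-! ### Points sorted around a hull vertex -/

/-- Neither `+ - +` nor `- + -` occurs as a subsequence of the signs `w, x, y, z`, where a true
proposition stands for `+`; equivalently, the sign changes at most once. -/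
def NoAlternation (w x y z : Prop) : Prop :=
  (w → y → x) ∧ (¬w → ¬y → ¬x) ∧ (w → z → x) ∧ (¬w → ¬z → ¬x) ∧
    (w → z → y) ∧ (¬w → ¬z → ¬y) ∧ (x → z → y) ∧ (¬x → ¬z → ¬y)

/-- If a positive multiple of `B` is a positive combination of `A` and `C`, then `B` has the sign
shared by `A` and `C`. -/
theorem sign_between {x y z A B C : ℝ} (hx : 0 < x) (hy : 0 < y) (hz : 0 < z)
    (h : y * B = x * A + z * C) : (0 < A → 0 < C → 0 < B) ∧ (¬0 < A → ¬0 < C → ¬0 < B) := by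
  constructor
  · intro hA hC
    have : 0 < y * B := by rw [h]; positivity
    exact (mul_pos_iff_of_pos_left hy).1 this
  · intro hA hC hB
    have := mul_pos hy hB
    nlinarith [mul_nonneg hx.le (neg_nonneg.2 (not_lt.1 hA)),
      mul_nonneg hz.le (neg_nonneg.2 (not_lt.1 hC))]

/-- For `a, b, c, d` sorted counterclockwise around `p`, each of the four forbidden alternations is
excluded by one three-term Grassmann–Plücker relation on `p, a, b, c, d`. -/
theorem noAlternation_of_sorted {p a b c d : Fin 2 → ℝ}
    (hab : 0 < orient p a b) (hac : 0 < orient p a c) (had : 0 < orient p a d)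
    (hbc : 0 < orient p b c) (hbd : 0 < orient p b d) (hcd : 0 < orient p c d) :
    NoAlternation (0 < orient a b c) (0 < orient a b d) (0 < orient a c d)
      (0 < orient b c d) := by
  obtain ⟨h1, h2⟩ := sign_between (A := orient a b c) (B := orient a b d) (C := orient a c d)
    had hac hab (by unfold orient; ring)
  obtain ⟨h3, h4⟩ := sign_between (A := orient a b c) (B := orient a b d) (C := orient b c d)
    hbd hbc hab (by unfold orient; ring)
  obtain ⟨h5, h6⟩ := sign_between (A := orient a b c) (B := orient a c d) (C := orient b c d)
    hcd hbc hac (by unfold orient; ring)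
  obtain ⟨h7, h8⟩ := sign_between (A := orient a b d) (B := orient a c d) (C := orient b c d)
    hcd hbd had (by unfold orient; ring)
  exact ⟨h1, h2, h3, h4, h5, h6, h7, h8⟩

theorem exists_sorted_enumeration {α : Type*} [Fintype α] {n : ℕ} (hn : Fintype.card α = n)
    (r : α → α → Prop) (hirr : ∀ a, ¬r a a) (htrans : ∀ a b c, r a b → r b c → r a c)
    (htri : ∀ a b, a ≠ b → r a b ∨ r b a) :
    ∃ e : Fin n → α, ∀ i j, i < j → r (e i) (e j) := by
  classical
  have : IsStrictTotalOrder α r :=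
    { irrefl := hirr
      trans := htrans
      trichotomous := fun a b h h' => by
        by_contra hab
        exact (htri a b hab).elim h h' }
  let _ : LinearOrder α := linearOrderOfSTO r
  let e := Fintype.orderIsoFinOfCardEq α hn
  exact ⟨e, fun i j hij => e.strictMono hij⟩

/-- Eight of the nine points can be sorted by angle around the remaining one, a vertex of the convex
hull. -/
theorem exists_sorted {S : Finset (Fin 2 → ℝ)} (hcard : S.card = 9)
    (hgp : InGeneralPosition 2 S) :
    ∃ p ∈ S, ∃ P : ℕ → Fin 2 → ℝ, (∀ i < 8, P i ∈ S) ∧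
      ∀ i j, i < j → j < 8 → 0 < orient p (P i) (P j) := by
  obtain ⟨p, hp, hmin⟩ := S.exists_min_image (fun q => toLex (q 0, q 1))
    (Finset.card_pos.1 (by omega))
  have hhalf : ∀ q ∈ S.erase p, p 0 < q 0 ∨ (p 0 = q 0 ∧ p 1 < q 1) := by
    intro q hq
    obtain ⟨hne, hqS⟩ := Finset.mem_erase.1 hq
    have := hmin q hqS
    simp only [Prod.Lex.le_iff, ofLex_toLex] at this
    rcases this with h | ⟨h, h'⟩
    · exact Or.inl h
    · refine Or.inr ⟨h, lt_of_le_of_ne h' fun h'' => hne ?_⟩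
      funext i
      fin_cases i
      · exact h.symm
      · exact h''.symm
  have htrans : ∀ u ∈ S.erase p, ∀ v ∈ S.erase p, ∀ w ∈ S.erase p,
      0 < orient p u v → 0 < orient p v w → 0 < orient p u w := by
    intro u hu v hv w hw huv hvw
    -- the Plücker relation expressing that three vectors of the plane are linearly dependent
    have key : (v 0 - p 0) * orient p u w =
        (u 0 - p 0) * orient p v w + (w 0 - p 0) * orient p u v := by
      unfold orient; ring
    rcases hhalf v hv with h | ⟨h, h'⟩
    · refine (mul_pos_iff_of_pos_left (sub_pos.2 h)).1 ?_
      rw [key]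
      rcases hhalf u hu with k | ⟨k, k'⟩
      · have hw0 : 0 ≤ w 0 - p 0 := by
          rcases hhalf w hw with l | ⟨l, -⟩ <;> linarith
        have := mul_pos (sub_pos.2 k) hvw
        have := mul_nonneg hw0 huv.le
        linarith
      · have := mul_pos (sub_pos.2 k') (sub_pos.2 h)
        unfold orient at huv
        rw [← k] at huv
        linarith
    · rcases hhalf w hw with l | ⟨l, -⟩
      · have := mul_pos (sub_pos.2 l) (sub_pos.2 h')
        unfold orient at hvw
        rw [← h] at hvw
        linarith
      · unfold orient at hvw
        rw [← l, ← h] at hvw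
        linarith
  have hswap : ∀ u v, orient p u v = -orient p v u := by
    intro u v; unfold orient; ring
  have hcard' : Fintype.card (S.erase p) = 8 := by
    rw [Fintype.card_coe, Finset.card_erase_of_mem hp, hcard]
  obtain ⟨e, he⟩ := exists_sorted_enumeration hcard'
    (fun u v : S.erase p => 0 < orient p u v)
    (fun u h => by linarith [hswap u u])
    (fun u v w => htrans u u.2 v v.2 w w.2)
    (fun u v huv => by
      obtain ⟨hu, huS⟩ := Finset.mem_erase.1 u.2
      obtain ⟨hv, hvS⟩ := Finset.mem_erase.1 v.2
      rcases lt_or_gt_of_ne (orient_ne_zero hgp hp huS hvS hu.symm hv.symm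
        (fun h => huv (Subtype.ext h))) with h | h
      · right
        linarith [hswap u v]
      · exact Or.inl h)
  refine ⟨p, hp, fun i => e (Fin.ofNat 8 i), fun i _ => Finset.mem_of_mem_erase (e _).2, ?_⟩
  intro i j hij hj
  apply he
  rw [Fin.lt_def]
  simp only [Fin.ofNat_eq_cast, Fin.val_natCast]
  omega

/-- Two consecutive counterclockwise turns among points sorted around `p` give a convex pentagon
that has `p` as a vertex. -/
theorem exists_pentagon_of_quad {S : Finset (Fin 2 → ℝ)} {p a b c d : Fin 2 → ℝ}
    (mp : p ∈ S) (ma : a ∈ S) (mb : b ∈ S) (mc : c ∈ S) (md : d ∈ S)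
    (hab : 0 < orient p a b) (hac : 0 < orient p a c) (had : 0 < orient p a d)
    (hbc : 0 < orient p b c) (hbd : 0 < orient p b d) (hcd : 0 < orient p c d)
    (h1 : 0 < orient a b c) (h2 : 0 < orient b c d) :
    ∃ X ⊆ S, X.card = 5 ∧ InConvexPosition 2 X := by
  obtain ⟨-, -, k1, -, k2, -⟩ := noAlternation_of_sorted hab hac had hbc hbd hcd
  exact exists_pentagon mp ma mb mc md hab hac had hbc hbd hcd h1 (k1 h1 h2) (k2 h1 h2) h2

/-- The seven sign patterns correspond to the ways of choosing a nonempty subset of `{b, c, d}` as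
the inner vertices of the upper (clockwise) chain from `a` to `e`, the remaining points being the
inner vertices of the lower chain. The counterclockwise order of the pentagon is the lower chain
from `a` to `e` followed by the upper chain from `e` back to `a`. -/
theorem exists_pentagon_of_quint {S : Finset (Fin 2 → ℝ)} {a b c d e : Fin 2 → ℝ}
    (ma : a ∈ S) (mb : b ∈ S) (mc : c ∈ S) (md : d ∈ S) (me : e ∈ S)
    (nabc : orient a b c ≠ 0) (nabd : orient a b d ≠ 0) (nabe : orient a b e ≠ 0)
    (nacd : orient a c d ≠ 0) (nace : orient a c e ≠ 0) (nade : orient a d e ≠ 0)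
    (nbcd : orient b c d ≠ 0) (nbce : orient b c e ≠ 0) (nbde : orient b d e ≠ 0)
    (ncde : orient c d e ≠ 0)
    (qabcd : NoAlternation (0 < orient a b c) (0 < orient a b d) (0 < orient a c d)
      (0 < orient b c d))
    (qabce : NoAlternation (0 < orient a b c) (0 < orient a b e) (0 < orient a c e)
      (0 < orient b c e))
    (qabde : NoAlternation (0 < orient a b d) (0 < orient a b e) (0 < orient a d e)
      (0 < orient b d e))
    (qacde : NoAlternation (0 < orient a c d) (0 < orient a c e) (0 < orient a d e)
      (0 < orient c d e))
    (qbcde : NoAlternation (0 < orient b c d) (0 < orient b c e) (0 < orient b d e)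
      (0 < orient c d e))
    (h : (¬0 < orient a b c ∧ ¬0 < orient b c d ∧ ¬0 < orient c d e) ∨
      (0 < orient a c d ∧ 0 < orient c d e ∧ ¬0 < orient a b e) ∨
      (0 < orient a b d ∧ 0 < orient b d e ∧ ¬0 < orient a c e) ∨
      (0 < orient a b c ∧ 0 < orient b c e ∧ ¬0 < orient a d e) ∨
      (¬0 < orient a c d ∧ ¬0 < orient c d e ∧ 0 < orient a b e) ∨
      (¬0 < orient a b d ∧ ¬0 < orient b d e ∧ 0 < orient a c e) ∨
      (¬0 < orient a b c ∧ ¬0 < orient b c e ∧ 0 < orient a d e)) :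
    ∃ X ⊆ S, X.card = 5 ∧ InConvexPosition 2 X := by
  have hneg : ∀ {x y z : Fin 2 → ℝ}, orient x y z ≠ 0 → ¬0 < orient x y z →
      0 < orient y x z ∧ 0 < orient z y x ∧ 0 < orient x z y := by
    intro x y z h0 h1
    have h2 : orient x y z < 0 := lt_of_le_of_ne (not_lt.1 h1) h0
    have e1 : orient y x z = -orient x y z := by unfold orient; ring
    have e2 : orient z y x = -orient x y z := by unfold orient; ring
    have e3 : orient x z y = -orient x y z := by unfold orient; ring
    exact ⟨by linarith, by linarith, by linarith⟩
  have hcyc : ∀ {x y z : Fin 2 → ℝ}, 0 < orient x y z → 0 < orient y z x := by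
    intro x y z h
    have e1 : orient y z x = orient x y z := by unfold orient; ring
    linarith
  -- the three given signs determine the other seven through the five `NoAlternation` hypotheses
  unfold NoAlternation at *
  rcases h with h | h | h | h | h | h | h
  · refine exists_pentagon ma me md mc mb ?_ ?_ ?_ ?_ ?_ ?_ ?_ ?_ ?_ ?_ <;> grind
  · refine exists_pentagon ma mc md me mb ?_ ?_ ?_ ?_ ?_ ?_ ?_ ?_ ?_ ?_ <;> grind
  · refine exists_pentagon ma mb md me mc ?_ ?_ ?_ ?_ ?_ ?_ ?_ ?_ ?_ ?_ <;> grind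
  · refine exists_pentagon ma mb mc me md ?_ ?_ ?_ ?_ ?_ ?_ ?_ ?_ ?_ ?_ <;> grind
  · refine exists_pentagon ma mb me md mc ?_ ?_ ?_ ?_ ?_ ?_ ?_ ?_ ?_ ?_ <;> grind
  · refine exists_pentagon ma mc me md mb ?_ ?_ ?_ ?_ ?_ ?_ ?_ ?_ ?_ ?_ <;> grind
  · refine exists_pentagon ma md me mc mb ?_ ?_ ?_ ?_ ?_ ?_ ?_ ?_ ?_ ?_ <;> grind

/-! ### The propositional search -/

/-- A conjunction of literals `(v, s)`, each saying that the variable `v` has the value `s`. -/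
abbrev Pattern := List (ℕ × Bool)

/-- The literal saying that the triple `a b c` is counterclockwise (`s = true`) or not
(`s = false`). For indices below 8 the triple is encoded by the octal number `abc`. -/
def lit (a b c : ℕ) (s : Bool) : ℕ × Bool := (64 * a + 8 * b + c, s)

/-- Patterns on the triples of `a < b < c < d`: the first one gives a convex pentagon with the
centre of the angular order, the others are the alternations that never occur. -/
def quadPatterns (a b c d : ℕ) : List Pattern :=
  [[lit a b c true, lit b c d true],
    [lit a b c true, lit a b d false, lit a c d true],
    [lit a b c true, lit a b d false, lit b c d true],
    [lit a b c true, lit a c d false, lit b c d true],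
    [lit a b d true, lit a c d false, lit b c d true],
    [lit a b c false, lit a b d true, lit a c d false],
    [lit a b c false, lit a b d true, lit b c d false],
    [lit a b c false, lit a c d true, lit b c d false],
    [lit a b d false, lit a c d true, lit b c d false]]

/-- The patterns on `a < b < c < d < e` that give a convex pentagon by
`exists_pentagon_of_quint`. The all-lower chain is missing because two of its three literals
already form the first pattern of `quadPatterns`. -/
def pentagonPatterns (a b c d e : ℕ) : List Pattern :=
  [[lit a b c false, lit b c d false, lit c d e false],
    [lit a c d true, lit c d e true, lit a b e false],
    [lit a b d true, lit b d e true, lit a c e false],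
    [lit a b c true, lit b c e true, lit a d e false],
    [lit a c d false, lit c d e false, lit a b e true],
    [lit a b d false, lit b d e false, lit a c e true],
    [lit a b c false, lit b c e false, lit a d e true]]

/-- All patterns on eight points. -/
def table : List Pattern :=
  (List.range 8).flatMap fun e => (List.range e).flatMap fun d => (List.range d).flatMap fun c =>
    (List.range c).flatMap fun b =>
      quadPatterns b c d e ++ (List.range b).flatMap fun a => pentagonPatterns a b c d e

/-- The triples in the order in which the search decides them: by increasing span `c - a`, then by
`a`, then by decreasing `b`. Deciding short triples first keeps the search tree small. -/
def branchOrder : List ℕ :=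
  (List.range 6).flatMap fun i => (List.range (6 - i)).flatMap fun a =>
    (List.range (i + 1)).map fun j => 64 * a + 8 * (a + i + 1 - j) + (a + i + 2)

/-- Takes the variables from the last one to the first and attaches to each variable the patterns
of `T` that mention it and no later variable. -/
def levelsAux : List ℕ → List Pattern → List (ℕ × List Pattern) → List (ℕ × List Pattern)
  | [], _, acc => acc
  | v :: vs, T, acc =>
    levelsAux vs (T.filter fun p => !p.any fun l => l.1.beq v)
      ((v, T.filter fun p => p.any fun l => l.1.beq v) :: acc)

/-- The variables in branching order, each with the patterns that become fully decided with it. -/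
def levels : List (ℕ × List Pattern) := levelsAux branchOrder.reverse table []

/-- Whether `p` holds under the partial assignment whose true variables are the bits of `pos` and
whose false variables are the bits of `neg`. Bits are read with the bare `Nat` operations, which the
kernel evaluates on literals. -/
def hit (pos neg : ℕ) (p : Pattern) : Bool :=
  p.all fun l => Nat.beq (Nat.land (Nat.shiftRight (bif l.2 then pos else neg) l.1) 1) 1

/-- Backtracking search: `true` means that every total assignment extending the partial one realizes
a pattern. -/
def refute : List (ℕ × List Pattern) → ℕ → ℕ → Bool
  | [], _, _ => false
  | (v, ps) :: rest, pos, neg =>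
    (ps.any (hit (pos.lor (Nat.pow 2 v)) neg) || refute rest (pos.lor (Nat.pow 2 v)) neg) &&
      (ps.any (hit pos (neg.lor (Nat.pow 2 v))) || refute rest pos (neg.lor (Nat.pow 2 v)))

theorem refute_levels : refute levels 0 0 = true := by decide +kernel

theorem refute_sound (f : ℕ → Bool) : ∀ (L : List (ℕ × List Pattern)) (pos neg : ℕ),
    refute L pos neg = true → (∀ v, pos.testBit v = true → f v = true) →
    (∀ v, neg.testBit v = true → f v = false) →
    ∃ l ∈ L, ∃ p ∈ l.2, ∀ x ∈ p, f x.1 = x.2 := by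
  have hit_sound : ∀ (pos neg : ℕ) (p : Pattern), hit pos neg p = true →
      (∀ v, pos.testBit v = true → f v = true) →
      (∀ v, neg.testBit v = true → f v = false) → ∀ x ∈ p, f x.1 = x.2 := by
    intro pos neg p h hpos hneg x hx
    have hx' := List.all_eq_true.1 h x hx
    have htest : ∀ m v : ℕ, Nat.beq (Nat.land (Nat.shiftRight m v) 1) 1 = true →
        m.testBit v = true := by
      intro m v hm
      have hm' : (m >>> v) &&& 1 = 1 := Nat.eq_of_beq_eq_true hm
      rw [Nat.testBit, Nat.and_comm, hm']
      rfl
    rcases x with ⟨v, _ | _⟩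
    · exact hneg v (htest _ _ hx')
    · exact hpos v (htest _ _ hx')
  have hset : ∀ (b : Bool) (m v : ℕ), f v = b → (∀ w, m.testBit w = true → f w = b) →
      ∀ w, (m.lor (Nat.pow 2 v)).testBit w = true → f w = b := by
    intro b m v hv hm w hw
    change (m ||| 2 ^ v).testBit w = true at hw
    rw [Nat.testBit_or, Bool.or_eq_true, Nat.testBit_two_pow] at hw
    rcases hw with hw | hw
    · exact hm w hw
    · rw [← of_decide_eq_true hw, hv]
  intro L
  induction L with
  | nil => intro pos neg h; simp [refute] at h
  | cons l rest ih =>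
    obtain ⟨v, ps⟩ := l
    intro pos neg h hpos hneg
    rw [refute, Bool.and_eq_true, Bool.or_eq_true, Bool.or_eq_true, List.any_eq_true,
      List.any_eq_true] at h
    cases hv : f v with
    | true =>
      have hpos' := hset true pos v hv hpos
      rcases h.1 with ⟨p, hp, hhit⟩ | h'
      · exact ⟨_, List.mem_cons_self, p, hp, hit_sound _ _ p hhit hpos' hneg⟩
      · obtain ⟨l, hl, hr⟩ := ih _ _ h' hpos' hneg
        exact ⟨l, List.mem_cons_of_mem _ hl, hr⟩
    | false =>
      have hneg' := hset false neg v hv hneg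
      rcases h.2 with ⟨p, hp, hhit⟩ | h'
      · exact ⟨_, List.mem_cons_self, p, hp, hit_sound _ _ p hhit hpos hneg'⟩
      · obtain ⟨l, hl, hr⟩ := ih _ _ h' hpos hneg'
        exact ⟨l, List.mem_cons_of_mem _ hl, hr⟩

theorem mem_levelsAux : ∀ (vs : List ℕ) (T : List Pattern) (acc : List (ℕ × List Pattern)),
    ∀ l ∈ levelsAux vs T acc, l ∈ acc ∨ ∀ p ∈ l.2, p ∈ T
  | [], _, _, _, hl => Or.inl hl
  | _ :: vs, T, _, l, hl => by
    rcases mem_levelsAux vs _ _ l hl with h | h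
    · rcases List.mem_cons.1 h with rfl | h
      · exact Or.inr fun p hp => List.mem_of_mem_filter hp
      · exact Or.inl h
    · exact Or.inr fun p hp => List.mem_of_mem_filter (h p hp)

/-- Every assignment of signs to the triples realizes some pattern. -/
theorem exists_pattern (f : ℕ → Bool) : ∃ p ∈ table, ∀ x ∈ p, f x.1 = x.2 := by
  obtain ⟨l, hl, p, hp, h⟩ := refute_sound f levels 0 0 refute_levels (by simp) (by simp)
  refine ⟨p, ?_, h⟩
  rcases mem_levelsAux _ _ _ l hl with h' | h'
  · simp at h'
  · exact h' p hp

theorem mem_table {p : Pattern} (hp : p ∈ table) :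
    (∃ a b c d, a < b ∧ b < c ∧ c < d ∧ d < 8 ∧ p ∈ quadPatterns a b c d) ∨
      ∃ a b c d e, a < b ∧ b < c ∧ c < d ∧ d < e ∧ e < 8 ∧ p ∈ pentagonPatterns a b c d e := by
  simp only [table, List.mem_flatMap, List.mem_range, List.mem_append] at hp
  obtain ⟨e, he, d, hd, c, hc, b, hb, h | ⟨a, ha, h⟩⟩ := hp
  · exact Or.inl ⟨b, c, d, e, hb, hc, hd, he, h⟩
  · exact Or.inr ⟨a, b, c, d, e, ha, hb, hc, hd, he, h⟩

/-! ### The theorem -/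

/-- Every set of 9 points in the plane in general position contains a 5-gon:
`g⁽²⁾(5) ≤ 9`. -/
theorem g2_5_le_9 (S : Finset (Fin 2 → ℝ)) (hcard : S.card = 9)
    (hgp : InGeneralPosition 2 S) :
    ∃ X ⊆ S, X.card = 5 ∧ InConvexPosition 2 X := by
  classical
  obtain ⟨p, hp, P, hPS, hP⟩ := exists_sorted hcard hgp
  -- `f` decodes the octal codes used by `lit`
  let f : ℕ → Bool := fun n => decide (0 < orient (P (n / 64)) (P (n / 8 % 8)) (P (n % 8)))
  have hf : ∀ {a b c : ℕ} (s : Bool), b < 8 → c < 8 →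
      f (lit a b c s).1 = decide (0 < orient (P a) (P b) (P c)) := by
    intro a b c s hb hc
    have h1 : (64 * a + 8 * b + c) / 64 = a := by omega
    have h2 : (64 * a + 8 * b + c) / 8 % 8 = b := by omega
    have h3 : (64 * a + 8 * b + c) % 8 = c := by omega
    simp only [f, lit, h1, h2, h3]
  have hf_true : ∀ {a b c : ℕ}, b < 8 → c < 8 → f (lit a b c true).1 = (lit a b c true).2 →
      0 < orient (P a) (P b) (P c) := by
    intro a b c hb hc h
    rw [hf _ hb hc] at h
    exact of_decide_eq_true h
  have hf_false : ∀ {a b c : ℕ}, b < 8 → c < 8 → f (lit a b c false).1 = (lit a b c false).2 →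
      ¬0 < orient (P a) (P b) (P c) := by
    intro a b c hb hc h
    rw [hf _ hb hc] at h
    exact of_decide_eq_false h
  have hne : ∀ {a b c : ℕ}, a < b → b < c → c < 8 → orient (P a) (P b) (P c) ≠ 0 := by
    have hdist : ∀ {i j : ℕ}, i < j → j < 8 → P i ≠ P j := by
      intro i j hij hj h
      have := hP i j hij hj
      rw [h] at this
      unfold orient at this
      linarith
    intro a b c hab hbc hc
    exact orient_ne_zero hgp (hPS a (by omega)) (hPS b (by omega)) (hPS c hc)
      (hdist hab (by omega)) (hdist (by omega) hc) (hdist hbc hc)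
  have hquad : ∀ {a b c d : ℕ}, a < b → b < c → c < d → d < 8 →
      NoAlternation (0 < orient (P a) (P b) (P c)) (0 < orient (P a) (P b) (P d))
        (0 < orient (P a) (P c) (P d)) (0 < orient (P b) (P c) (P d)) := by
    intro a b c d hab hbc hcd hd
    apply noAlternation_of_sorted (p := p) <;> apply hP <;> omega
  obtain ⟨pat, hpat, hreal⟩ := exists_pattern f
  rcases mem_table hpat with ⟨a, b, c, d, hab, hbc, hcd, hd, hmem⟩ |
    ⟨a, b, c, d, e, hab, hbc, hcd, hde, he, hmem⟩
  · have hb : b < 8 := by omega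
    have hc : c < 8 := by omega
    have hq := hquad hab hbc hcd hd
    simp only [quadPatterns, List.mem_cons, List.not_mem_nil, or_false] at hmem
    rcases hmem with rfl | hmem
    · simp only [List.mem_cons, List.not_mem_nil, or_false, forall_eq_or_imp, forall_eq] at hreal
      have h1 := hf_true hb hc hreal.1
      have h2 := hf_true hc hd hreal.2
      exact exists_pentagon_of_quad hp (hPS a (by omega)) (hPS b hb) (hPS c hc) (hPS d hd)
        (hP _ _ hab hb) (hP _ _ (by omega) hc) (hP _ _ (by omega) hd) (hP _ _ hbc hc)
        (hP _ _ (by omega) hd) (hP _ _ hcd hd) h1 h2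
    · exfalso
      obtain ⟨q1, q2, q3, q4, q5, q6, q7, q8⟩ := hq
      rcases hmem with rfl | rfl | rfl | rfl | rfl | rfl | rfl | rfl <;>
      simp only [List.mem_cons, List.not_mem_nil, or_false, forall_eq_or_imp,
        forall_eq] at hreal <;>
      obtain ⟨r1, r2, r3⟩ := hreal
      · exact hf_false hb hd r2 (q1 (hf_true hb hc r1) (hf_true hc hd r3))
      · exact hf_false hb hd r2 (q3 (hf_true hb hc r1) (hf_true hc hd r3))
      · exact hf_false hc hd r2 (q5 (hf_true hb hc r1) (hf_true hc hd r3))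
      · exact hf_false hc hd r2 (q7 (hf_true hb hd r1) (hf_true hc hd r3))
      · exact q2 (hf_false hb hc r1) (hf_false hc hd r3) (hf_true hb hd r2)
      · exact q4 (hf_false hb hc r1) (hf_false hc hd r3) (hf_true hb hd r2)
      · exact q6 (hf_false hb hc r1) (hf_false hc hd r3) (hf_true hc hd r2)
      · exact q8 (hf_false hb hd r1) (hf_false hc hd r3) (hf_true hc hd r2)
  · have hb : b < 8 := by omega
    have hc : c < 8 := by omega
    have hd : d < 8 := by omega
    have h := exists_pentagon_of_quint (hPS a (by omega)) (hPS b hb) (hPS c hc) (hPS d hd)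
      (hPS e he) (hne hab hbc hc) (hne hab (by omega) hd) (hne hab (by omega) he)
      (hne (by omega) hcd hd) (hne (by omega) (by omega) he) (hne (by omega) hde he)
      (hne hbc hcd hd) (hne hbc (by omega) he) (hne (by omega) hde he) (hne hcd hde he)
      (hquad hab hbc hcd hd) (hquad hab hbc (by omega) he) (hquad hab (by omega) hde he)
      (hquad (by omega) hcd hde he) (hquad hbc hcd hde he)
    apply h
    simp only [pentagonPatterns, List.mem_cons, List.not_mem_nil, or_false] at hmem
    rcases hmem with rfl | rfl | rfl | rfl | rfl | rfl | rfl <;>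
    simp only [List.mem_cons, List.not_mem_nil, or_false, forall_eq_or_imp, forall_eq] at hreal <;>
    obtain ⟨r1, r2, r3⟩ := hreal
    · exact .inl ⟨hf_false hb hc r1, hf_false hc hd r2, hf_false hd he r3⟩
    · exact .inr (.inl ⟨hf_true hc hd r1, hf_true hd he r2, hf_false hb he r3⟩)
    · exact .inr (.inr (.inl ⟨hf_true hb hd r1, hf_true hd he r2, hf_false hc he r3⟩))
    · exact .inr (.inr (.inr (.inl ⟨hf_true hb hc r1, hf_true hc he r2, hf_false hd he r3⟩)))
    · exact .inr (.inr (.inr (.inr (.inl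
        ⟨hf_false hc hd r1, hf_false hd he r2, hf_true hb he r3⟩))))
    · exact .inr (.inr (.inr (.inr (.inr (.inl
        ⟨hf_false hb hd r1, hf_false hd he r2, hf_true hc he r3⟩)))))
    · exact .inr (.inr (.inr (.inr (.inr (.inr
        ⟨hf_false hb hc r1, hf_false hc he r2, hf_true hd he r3⟩)))))
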